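/- arXiv:2512.20386 — 7 statements merged into one kernel-verified Lean document; each statement's English description precedes it below -/
import Mathlib

section
/- Let A be a symmetric positive definite 2×2 real matrix and let G_A(ξ, η) = (1/(2π√(det A))) · log √((ξ−η)ᵀ A⁻¹ (ξ−η)). Then for every fixed η ∈ ℝ², the function ξ ↦ G_A(ξ, η) satisfies the anisotropic Laplacian equation div(A ∇_ξ G_A(ξ, η)) = 0 at every point ξ ∈ ℝ² with ξ ≠ η. -/
open Matrix Real MeasureTheory

/-- The divergence of a vector field on `ℝᵈ`: the trace of its Fréchet derivative. -/
noncomputable def adiv {d : ℕ} (F : EuclideanSpace ℝ (Fin d) → EuclideanSpace ℝ (Fin d))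
    (x : EuclideanSpace ℝ (Fin d)) : ℝ :=
  LinearMap.trace ℝ (EuclideanSpace ℝ (Fin d)) (fderiv ℝ F x).toLinearMap

/-- The quadratic form `xᵀ M x` associated to a `d × d` matrix. -/
noncomputable def quadForm {d : ℕ} (M : Matrix (Fin d) (Fin d) ℝ)
    (x : EuclideanSpace ℝ (Fin d)) : ℝ :=
  ∑ i, ∑ j, x i * M i j * x j

/-- Matrix-vector multiplication, acting on Euclidean space. -/
noncomputable def matVec {d : ℕ} (M : Matrix (Fin d) (Fin d) ℝ)
    (x : EuclideanSpace ℝ (Fin d)) : EuclideanSpace ℝ (Fin d) :=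
  Matrix.toEuclideanLin M x

theorem quadForm_eq_inner_aux (M : Matrix (Fin 2) (Fin 2) ℝ) (x : EuclideanSpace ℝ (Fin 2)) :
    quadForm M x = inner ℝ (Matrix.toEuclideanLin M x) x := by
  simp [quadForm, PiLp.inner_apply, Matrix.toEuclideanLin, Matrix.mulVec, dotProduct, Fin.sum_univ_two]
  ring

theorem quadForm_pos_aux (M : Matrix (Fin 2) (Fin 2) ℝ) (hM : M.PosDef)
    (x : EuclideanSpace ℝ (Fin 2)) (hx : x ≠ 0) : 0 < quadForm M x := by
  have h := hM.dotProduct_mulVec_pos (x := x.ofLp) (by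
    intro h; apply hx; ext i; simp [h])
  simp [Matrix.mulVec, dotProduct, Fin.sum_univ_two] at h
  simp [quadForm, Fin.sum_univ_two]
  linarith

theorem quadForm_hasFDerivAt_aux (M : Matrix (Fin 2) (Fin 2) ℝ) (hM : M.IsSymm)
    (η x : EuclideanSpace ℝ (Fin 2)) :
    HasFDerivAt (fun z => quadForm M (z - η))
      ((2 : ℝ) • innerSL ℝ (Matrix.toEuclideanLin M (x - η))) x := by
  have h0 : HasFDerivAt (fun z : EuclideanSpace ℝ (Fin 2) => z - η)
      (ContinuousLinearMap.id ℝ _) x := (hasFDerivAt_id x).sub_const η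
  have h1 := ((Matrix.toEuclideanLin M).toContinuousLinearMap.hasFDerivAt (x := x - η)).comp x h0
  have h2 := h1.inner ℝ h0
  have e : (fun z => quadForm M (z - η)) = fun z => inner ℝ
      (((Matrix.toEuclideanLin M).toContinuousLinearMap ∘ fun z => z - η) z) (z - η) := by
    funext z; rw [quadForm_eq_inner_aux]; rfl
  rw [e]
  refine h2.congr_fderiv ?_
  have hs : M 1 0 = M 0 1 := hM.apply 0 1
  ext v
  simp [PiLp.inner_apply, Matrix.toEuclideanLin, Matrix.mulVec, dotProduct, Fin.sum_univ_two, hs]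
  ring

/-- For a symmetric positive definite `2 × 2` matrix `A` and fixed `η ∈ ℝ²`, the
function `ξ ↦ G_A(ξ, η) = (1/(2π√(det A))) log √((ξ−η)ᵀ A⁻¹ (ξ−η))` satisfies the anisotropic
Laplacian equation `div(A ∇_ξ G_A(ξ, η)) = 0` at every `ξ ≠ η`. -/
theorem anisotropic_fundamental_solution_harmonic_2d
    (A : Matrix (Fin 2) (Fin 2) ℝ) (hA : A.PosDef) (hAsymm : A.IsSymm)
    (η : EuclideanSpace ℝ (Fin 2)) :
    ∀ ξ : EuclideanSpace ℝ (Fin 2), ξ ≠ η →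
      adiv (fun ζ => matVec A (gradient
        (fun ζ' => (1 / (2 * π * Real.sqrt A.det)) *
          Real.log (Real.sqrt (quadForm A⁻¹ (ζ' - η)))) ζ)) ξ = 0 := by
  intro ξ hξ
  generalize (1 / (2 * π * Real.sqrt A.det)) = c
  have hB : (A⁻¹).PosDef := hA.inv
  have hBs : (A⁻¹).IsSymm := by
    unfold Matrix.IsSymm
    rw [Matrix.transpose_nonsing_inv, hAsymm.eq]
  have hdet : IsUnit A.det := hA.det_pos.ne'.isUnit
  have hAB : ∀ x, Matrix.toEuclideanLin A (Matrix.toEuclideanLin A⁻¹ x) = x := by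
    intro x
    have h : A *ᵥ (A⁻¹ *ᵥ x.ofLp) = x.ofLp := by
      rw [Matrix.mulVec_mulVec, Matrix.mul_nonsing_inv _ hdet, Matrix.one_mulVec]
    exact congrArg (WithLp.toLp 2) h
  have key : ∀ ζ, ζ ≠ η → matVec A (gradient (fun ζ' => c *
          Real.log (Real.sqrt (quadForm A⁻¹ (ζ' - η)))) ζ)
      = (c * (quadForm A⁻¹ (ζ - η))⁻¹) • (ζ - η) := by
    intro ζ hζ
    have hq := quadForm_pos_aux _ hB (ζ - η) (sub_ne_zero.2 hζ)
    have hd := quadForm_hasFDerivAt_aux _ hBs η ζ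
    have hg : HasGradientAt (fun ζ' => c * Real.log (Real.sqrt (quadForm A⁻¹ (ζ' - η))))
        ((c * (quadForm A⁻¹ (ζ - η))⁻¹) • Matrix.toEuclideanLin A⁻¹ (ζ - η)) ζ := by
      rw [hasGradientAt_iff_hasFDerivAt]
      refine (((hd.sqrt hq.ne').log (Real.sqrt_pos.2 hq).ne').const_mul c).congr_fderiv ?_
      ext v
      have hs := Real.mul_self_sqrt hq.le
      have hs0 := (Real.sqrt_pos.2 hq).ne'
      set s := Real.sqrt (quadForm A⁻¹ (ζ - η))
      rw [← hs]
      simp only [map_smul, _root_.smul_apply, smul_eq_mul,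
        InnerProductSpace.toDual_apply_apply, innerSL_apply_apply]
      field_simp
    rw [hg.gradient, matVec, map_smul, hAB]
  have hq := quadForm_pos_aux _ hB (ξ - η) (sub_ne_zero.2 hξ)
  have hd := quadForm_hasFDerivAt_aux _ hBs η ξ
  have h0 : HasFDerivAt (fun z : EuclideanSpace ℝ (Fin 2) => z - η)
      (ContinuousLinearMap.id ℝ _) ξ := (hasFDerivAt_id ξ).sub_const η
  have hi := ((hasDerivAt_inv hq.ne').comp_hasFDerivAt ξ hd).const_mul c
  have hF := hi.smul h0
  have hev : (fun ζ => matVec A (gradient (fun ζ' => c *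
          Real.log (Real.sqrt (quadForm A⁻¹ (ζ' - η)))) ζ))
      =ᶠ[nhds ξ] fun ζ => (c * (quadForm A⁻¹ (ζ - η))⁻¹) • (ζ - η) := by
    filter_upwards [isOpen_ne.mem_nhds hξ] with ζ hζ using key ζ hζ
  unfold adiv
  have hF' := HasFDerivAt.fderiv (f := fun ζ => (c * (quadForm A⁻¹ (ζ - η))⁻¹) • (ζ - η)) hF
  rw [hev.fderiv_eq, hF']
  have hqi := quadForm_eq_inner_aux A⁻¹ (ξ - η)
  simp [LinearMap.trace_smulRight]
  rw [← inner_sub_left, ← map_sub, ← hqi]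
  field_simp
  ring
end

section
/- Let A be a symmetric positive definite 2×2 real matrix, let v ≠ w be points of ℝ², let S = {v + t(w−v) : t ∈ [0,1]} be the closed segment from v to w, and define the anisotropic Neumann coordinate ψ(η) = −(‖w−v‖/(2π√(det A))) ∫₀¹ log √((v + t(w−v) − η)ᵀ A⁻¹ (v + t(w−v) − η)) dt for η ∈ ℝ² ∖ S. Then ψ is generalized harmonic with respect to A on ℝ² ∖ S, i.e. div(A ∇ψ)(η) = 0 for every η ∉ S. -/
open Matrix Real MeasureTheory

section helpers

theorem aux_param {E F : Type*} [NormedAddCommGroup E] [NormedSpace ℝ E] [FiniteDimensional ℝ E]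
    [NormedAddCommGroup F] [NormedSpace ℝ F]
    (G : E → F) (G' : E → E →L[ℝ] F) (hG : ∀ x, x ≠ 0 → HasFDerivAt G (G' x) x)
    (hG' : ContinuousOn G' {x | x ≠ 0}) (γ : ℝ → E) (hγ : Continuous γ) (η : E)
    (hη : η ∉ γ '' Set.Icc (0:ℝ) 1) :
    HasFDerivAt (fun ζ => ∫ t in (0:ℝ)..1, G (γ t - ζ)) (∫ t in (0:ℝ)..1, -(G' (γ t - η))) η := by
  have hGc : ContinuousOn G {x | x ≠ 0} := fun x hx => (hG x hx).continuousAt.continuousWithinAt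
  have hcl : IsClosed (γ '' Set.Icc (0:ℝ) 1) := (isCompact_Icc.image hγ).isClosed
  obtain ⟨r, hr, hball⟩ := Metric.nhds_basis_closedBall.mem_iff.1 (hcl.isOpen_compl.mem_nhds hη)
  have hne : ∀ t ∈ Set.Icc (0:ℝ) 1, ∀ ζ ∈ Metric.closedBall η r, γ t - ζ ≠ 0 := by
    intro t ht ζ hζ h
    exact hball hζ ⟨t, ht, sub_eq_zero.1 h⟩
  have hK : IsCompact (Set.Icc (0:ℝ) 1 ×ˢ Metric.closedBall η r) :=
    isCompact_Icc.prod (isCompact_closedBall η r)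
  have hc : ContinuousOn (fun p : ℝ × E => G' (γ p.1 - p.2))
      (Set.Icc (0:ℝ) 1 ×ˢ Metric.closedBall η r) := by
    refine hG'.comp (t := {x | x ≠ 0}) (f := fun p : ℝ × E => γ p.1 - p.2) (by fun_prop) ?_
    rintro ⟨t, ζ⟩ ⟨h1, h2⟩
    exact hne t h1 ζ h2
  obtain ⟨C, hC⟩ := hK.exists_bound_of_continuousOn hc
  have hcG : ∀ ζ ∈ Metric.closedBall η r,
      ContinuousOn (fun t => G (γ t - ζ)) (Set.Icc (0:ℝ) 1) := fun ζ hζ =>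
    hGc.comp (t := {x | x ≠ 0}) (f := fun t => γ t - ζ) (by fun_prop) (fun t ht => hne t ht ζ hζ)
  have hcG' : ContinuousOn (fun t => -G' (γ t - η)) (Set.Icc (0:ℝ) 1) :=
    (hG'.comp (t := {x | x ≠ 0}) (f := fun t => γ t - η) (by fun_prop)
      (fun t ht => hne t ht η (Metric.mem_closedBall_self hr.le))).neg
  have hsub : Set.uIoc (0:ℝ) 1 ⊆ Set.Icc 0 1 := by
    rw [Set.uIoc_of_le zero_le_one]; exact Set.Ioc_subset_Icc_self
  refine (intervalIntegral.hasFDerivAt_integral_of_dominated_of_fderiv_le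
    (bound := fun _ => C) (F := fun ζ t => G (γ t - ζ)) (F' := fun ζ t => -(G' (γ t - ζ)))
    (s := Metric.closedBall η r) (Metric.closedBall_mem_nhds η hr) ?_ ?_ ?_ ?_ ?_ ?_)
  · filter_upwards [Metric.closedBall_mem_nhds η hr] with ζ hζ
    exact ((hcG ζ hζ).mono hsub).aestronglyMeasurable measurableSet_uIoc
  · apply ContinuousOn.intervalIntegrable
    rw [Set.uIcc_of_le zero_le_one]
    exact hcG η (Metric.mem_closedBall_self hr.le)
  · exact (hcG'.mono hsub).aestronglyMeasurable measurableSet_uIoc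
  · refine Filter.Eventually.of_forall fun t ht ζ hζ => ?_
    rw [norm_neg]
    exact hC (t, ζ) ⟨hsub ht, hζ⟩
  · exact intervalIntegrable_const
  · refine Filter.Eventually.of_forall fun t ht ζ hζ => ?_
    have h1 : HasFDerivAt (fun ζ : E => γ t - ζ) (-(ContinuousLinearMap.id ℝ E)) ζ :=
      (hasFDerivAt_id ζ).const_sub (γ t)
    have h2 := (hG _ (hne t (hsub ht) ζ hζ)).comp ζ h1
    refine HasFDerivAt.congr_fderiv (f := fun ζ => G (γ t - ζ)) h2 ?_
    ext; simp

variable {E : Type*} [NormedAddCommGroup E] [InnerProductSpace ℝ E] [FiniteDimensional ℝ E]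

theorem aux_q (b : E →L[ℝ] E) (hb : ∀ x y, inner ℝ (b x) y = inner ℝ x (b y)) (x : E) :
    HasFDerivAt (fun x => inner ℝ x (b x)) ((2:ℝ) • innerSL ℝ (b x)) x := by
  have h := (hasFDerivAt_id x).inner ℝ b.hasFDerivAt (x := x)
  refine h.congr_fderiv ?_
  ext y
  simp [fderivInnerCLM_apply, two_mul]
  rw [← hb x y, real_inner_comm y (b x)]

theorem aux_main (hE : Module.finrank ℝ E = 2) (a b : E →L[ℝ] E)
    (hb : ∀ x y, inner ℝ (b x) y = inner ℝ x (b y)) (hab : ∀ x, a (b x) = x)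
    (hpos : ∀ x, x ≠ 0 → 0 < inner ℝ x (b x)) (c : ℝ) (γ : ℝ → E) (hγ : Continuous γ) (η : E)
    (hη : η ∉ γ '' Set.Icc (0:ℝ) 1) :
    LinearMap.trace ℝ E (fderiv ℝ (fun ζ => a (gradient (fun ζ' => c * ∫ t in (0:ℝ)..1,
      Real.log (Real.sqrt (inner ℝ (γ t - ζ') (b (γ t - ζ'))))) ζ)) η).toLinearMap = 0 := by
  have : CompleteSpace E := FiniteDimensional.complete ℝ E
  have hcl : IsClosed (γ '' Set.Icc (0:ℝ) 1) := (isCompact_Icc.image hγ).isClosed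
  have hii : ∀ {F : Type _} [NormedAddCommGroup F] [NormedSpace ℝ F] (G : E → F),
      ContinuousOn G {x | x ≠ 0} → ∀ ζ, ζ ∉ γ '' Set.Icc (0:ℝ) 1 →
      IntervalIntegrable (fun t => G (γ t - ζ)) volume 0 1 := by
    intro F _ _ G hG ζ hζ
    apply ContinuousOn.intervalIntegrable
    rw [Set.uIcc_of_le zero_le_one]
    exact hG.comp (t := {x | x ≠ 0}) (f := fun t => γ t - ζ) (by fun_prop)
      (fun t ht h => hζ ⟨t, ht, sub_eq_zero.1 h⟩)
  have hq : ∀ x : E, HasFDerivAt (fun x => inner ℝ x (b x)) ((2:ℝ) • innerSL ℝ (b x)) x :=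
    aux_q b hb
  have hqc : Continuous (fun x : E => (inner ℝ x (b x) : ℝ)) := by fun_prop
  have hinv : ContinuousOn (fun x : E => (inner ℝ x (b x) : ℝ)⁻¹) {x | x ≠ 0} :=
    hqc.continuousOn.inv₀ (fun x hx => (hpos x hx).ne')
  have hsl : Continuous (fun x : E => innerSL ℝ (b x)) := (innerSL ℝ).continuous.comp b.continuous
  -- the kernel
  have hk : ∀ x : E, x ≠ 0 → HasFDerivAt (fun x => Real.log (Real.sqrt (inner ℝ x (b x))))
      ((inner ℝ x (b x) : ℝ)⁻¹ • innerSL ℝ (b x)) x := by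
    intro x hx
    have h1 := ((hq x).log (hpos x hx).ne').const_mul (1/2 : ℝ)
    have h2 : HasFDerivAt (fun x => (1/2 : ℝ) * Real.log (inner ℝ x (b x)))
      ((inner ℝ x (b x) : ℝ)⁻¹ • innerSL ℝ (b x)) x := by
      refine h1.congr_fderiv ?_
      ext y; simp
      ring
    refine h2.congr_of_eventuallyEq ?_
    filter_upwards [isOpen_ne.mem_nhds hx] with y hy
    rw [Real.log_sqrt (hpos y hy).le]; ring
  have hkc : ContinuousOn (fun x : E => (inner ℝ x (b x) : ℝ)⁻¹ • innerSL ℝ (b x)) {x | x ≠ 0} :=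
    hinv.smul hsl.continuousOn
  have hgc : ContinuousOn (fun x : E => (inner ℝ x (b x) : ℝ)⁻¹ • b x) {x | x ≠ 0} :=
    hinv.smul b.continuous.continuousOn
  have hHc : ContinuousOn (fun x : E => (inner ℝ x (b x) : ℝ)⁻¹ • x) {x | x ≠ 0} :=
    hinv.smul continuousOn_id
  have hgrad : ∀ ζ, ζ ∉ γ '' Set.Icc (0:ℝ) 1 →
      a (gradient (fun ζ' => c * ∫ t in (0:ℝ)..1,
        Real.log (Real.sqrt (inner ℝ (γ t - ζ') (b (γ t - ζ'))))) ζ) =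
      (-c) • ∫ t in (0:ℝ)..1, (inner ℝ (γ t - ζ) (b (γ t - ζ)) : ℝ)⁻¹ • (γ t - ζ) := by
    intro ζ hζ
    have h1 := (aux_param _ _ hk hkc γ hγ ζ hζ).const_mul c
    have h2 : HasGradientAt (fun ζ' => c * ∫ t in (0:ℝ)..1,
        Real.log (Real.sqrt (inner ℝ (γ t - ζ') (b (γ t - ζ')))))
        ((-c) • ∫ t in (0:ℝ)..1, (inner ℝ (γ t - ζ) (b (γ t - ζ)) : ℝ)⁻¹ • b (γ t - ζ)) ζ := by
      rw [hasGradientAt_iff_hasFDerivAt]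
      refine h1.congr_fderiv ?_
      ext y
      have e1 := (innerSL ℝ y).intervalIntegral_comp_comm (hii _ hgc ζ hζ)
      rw [InnerProductSpace.toDual_apply_apply, real_inner_comm, inner_smul_right,
        ← innerSL_apply_apply ℝ y, ← e1, ContinuousLinearMap.smul_apply,
        intervalIntegral.integral_neg, ContinuousLinearMap.neg_apply,
        ContinuousLinearMap.intervalIntegral_apply (hii _ hkc ζ hζ)]
      simp [real_inner_comm, inner_sub_right]
    rw [h2.gradient, map_smul, ← a.intervalIntegral_comp_comm (hii _ hgc ζ hζ)]
    simp only [map_smul, hab]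
  have hH : ∀ x : E, x ≠ 0 → HasFDerivAt (fun x : E => (inner ℝ x (b x) : ℝ)⁻¹ • x)
      ((inner ℝ x (b x) : ℝ)⁻¹ • ContinuousLinearMap.id ℝ E +
        (-((inner ℝ x (b x) : ℝ) ^ 2)⁻¹ • ((2:ℝ) • innerSL ℝ (b x))).smulRight x) x := by
    intro x hx
    have h := ((hasDerivAt_inv (hpos x hx).ne').comp_hasFDerivAt x (hq x)).smul (hasFDerivAt_id x)
    exact h
  have hHc' : ContinuousOn (fun x : E => (inner ℝ x (b x) : ℝ)⁻¹ • ContinuousLinearMap.id ℝ E +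
        (-((inner ℝ x (b x) : ℝ) ^ 2)⁻¹ • ((2:ℝ) • innerSL ℝ (b x))).smulRight x) {x | x ≠ 0} := by
    have hinv2 : ContinuousOn (fun x : E => ((inner ℝ x (b x) : ℝ)^2)⁻¹) {x | x ≠ 0} :=
      (hqc.pow 2).continuousOn.inv₀ (fun x hx => (pow_pos (hpos x hx) 2).ne')
    refine (hinv.smul continuousOn_const).add ?_
    have h3 := hinv2.neg.smul (hsl.const_smul (2:ℝ)).continuousOn
    exact ((ContinuousLinearMap.smulRightL ℝ E E).continuous.comp_continuousOn h3).clm_apply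
      continuousOn_id
  have hD := (aux_param _ _ hH hHc' γ hγ η hη).const_smul (-c)
  have hev : (fun ζ => a (gradient (fun ζ' => c * ∫ t in (0:ℝ)..1,
      Real.log (Real.sqrt (inner ℝ (γ t - ζ') (b (γ t - ζ'))))) ζ)) =ᶠ[nhds η]
      (-c) • fun ζ => ∫ t in (0:ℝ)..1, (inner ℝ (γ t - ζ) (b (γ t - ζ)) : ℝ)⁻¹ • (γ t - ζ) := by
    filter_upwards [hcl.isOpen_compl.mem_nhds hη] with ζ hζ
    exact hgrad ζ hζ
  rw [hev.fderiv_eq, hD.fderiv]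
  let T : (E →L[ℝ] E) →L[ℝ] ℝ := LinearMap.toContinuousLinearMap
    ((LinearMap.trace ℝ E) ∘ₗ (ContinuousLinearMap.coeLM ℝ))
  have hT : ∀ f : E →L[ℝ] E, T f = LinearMap.trace ℝ E f.toLinearMap := fun f => rfl
  rw [← hT, map_smul, intervalIntegral.integral_neg, map_neg,
    ← T.intervalIntegral_comp_comm (hii _ hHc' η hη)]
  have hz : ∀ t ∈ Set.uIcc (0:ℝ) 1, T ((inner ℝ (γ t - η) (b (γ t - η)) : ℝ)⁻¹ • ContinuousLinearMap.id ℝ E +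
        (-((inner ℝ (γ t - η) (b (γ t - η)) : ℝ) ^ 2)⁻¹ •
          ((2:ℝ) • innerSL ℝ (b (γ t - η)))).smulRight (γ t - η)) = 0 := by
    intro t ht
    rw [Set.uIcc_of_le zero_le_one] at ht
    have hx : γ t - η ≠ 0 := fun h => hη ⟨t, ht, sub_eq_zero.1 h⟩
    generalize γ t - η = x at hx
    have hp := (hpos x hx).ne'
    have e1 : T (ContinuousLinearMap.id ℝ E) = 2 := by
      rw [hT, ContinuousLinearMap.coe_id, LinearMap.trace_id, hE]; norm_num
    have e2 : ∀ f : E →L[ℝ] ℝ, T (f.smulRight x) = f x := by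
      intro f
      rw [hT]
      exact LinearMap.trace_smulRight _ _
    rw [map_add, map_smul, e1, e2]
    simp only [ContinuousLinearMap.smul_apply, innerSL_apply_apply, smul_eq_mul,
      real_inner_comm]
    rw [real_inner_comm] at hp ⊢
    field_simp
    try ring
  rw [intervalIntegral.integral_congr hz]
  simp

end helpers

/-- The anisotropic Neumann coordinate
`ψ(η) = −(‖w−v‖/(2π√(det A))) ∫₀¹ log √((v + t(w−v) − η)ᵀ A⁻¹ (v + t(w−v) − η)) dt`
of a segment `S` from `v` to `w` is generalized harmonic with respect to `A` outside `S`: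
`div(A ∇ψ)(η) = 0` for every `η ∉ S`. -/
theorem anisotropic_neumann_coordinate_generalized_harmonic
    (A : Matrix (Fin 2) (Fin 2) ℝ) (hA : A.PosDef) (hAsymm : A.IsSymm)
    (v w : EuclideanSpace ℝ (Fin 2)) (hvw : v ≠ w) :
    ∀ η : EuclideanSpace ℝ (Fin 2),
      η ∉ (fun t : ℝ => v + t • (w - v)) '' Set.Icc (0 : ℝ) 1 →
      adiv (fun ζ => matVec A (gradient
        (fun ζ' => -(‖w - v‖ / (2 * π * Real.sqrt A.det)) *
          ∫ t in (0:ℝ)..1,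
            Real.log (Real.sqrt (quadForm A⁻¹ (v + t • (w - v) - ζ')))) ζ)) η = 0 := by

  intro η hη
  have hdet : IsUnit A.det := hA.det_pos.ne'.isUnit
  let a : EuclideanSpace ℝ (Fin 2) →L[ℝ] EuclideanSpace ℝ (Fin 2) :=
    LinearMap.toContinuousLinearMap (Matrix.toEuclideanLin A)
  let b : EuclideanSpace ℝ (Fin 2) →L[ℝ] EuclideanSpace ℝ (Fin 2) :=
    LinearMap.toContinuousLinearMap (Matrix.toEuclideanLin A⁻¹)
  have hBs : A⁻¹.IsSymm := by
    rw [Matrix.IsSymm, Matrix.transpose_nonsing_inv, hAsymm.eq]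
  have hB := hA.inv
  have hbq : ∀ x, quadForm A⁻¹ x = inner ℝ x (b x) := by
    intro x
    simp [quadForm, b, Fin.sum_univ_two, PiLp.inner_apply, Matrix.toLpLin_apply, Matrix.mulVec,
      dotProduct]
    ring
  have key := aux_main (by simp) a b ?_ ?_ ?_ (-(‖w - v‖ / (2 * π * Real.sqrt A.det)))
    (fun t : ℝ => v + t • (w - v)) (by fun_prop) η hη
  · simp only [hbq]
    exact key
  · intro x y
    have h01 : A⁻¹ 1 0 = A⁻¹ 0 1 := hBs.apply 0 1
    simp [b, Fin.sum_univ_two, PiLp.inner_apply, Matrix.toLpLin_apply, Matrix.mulVec,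
      dotProduct, h01]
    ring
  · intro x
    change Matrix.toEuclideanLin A (Matrix.toEuclideanLin A⁻¹ x) = x
    rw [Matrix.toLpLin_apply, Matrix.toLpLin_apply, WithLp.ofLp_toLp, Matrix.mulVec_mulVec,
      Matrix.mul_nonsing_inv A hdet, Matrix.one_mulVec]
  · intro x hx
    have h := hB.dotProduct_mulVec_pos (x := x.ofLp) (by simpa using hx)
    rw [← hbq]
    simp [Fin.sum_univ_two, Matrix.mulVec, dotProduct] at h
    simp [quadForm, Fin.sum_univ_two]
    linarith
end

section
/- Let A be a symmetric positive definite 2×2 real matrix, let v ≠ w be points of ℝ², let S = {v + t(w−v) : t ∈ [0,1]}, let n be the unit vector obtained by rotating (w−v)/‖w−v‖ clockwise by 90 degrees, and define the anisotropic Dirichlet coordinate φ(η) = (‖w−v‖/(2π√(det A))) ∫₀¹ (1−t) · ((v + t(w−v) − η)·n) / ((v + t(w−v) − η)ᵀ A⁻¹ (v + t(w−v) − η)) dt for η ∈ ℝ² ∖ S. Then φ is infinitely differentiable on ℝ² ∖ S and satisfies div(A ∇φ)(η) = 0 for every η ∉ S. -/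
open Matrix Real MeasureTheory
open scoped RealInnerProductSpace

/-- Rotation of a vector in `ℝ²` clockwise by 90 degrees: `(x₁, x₂) ↦ (x₂, −x₁)`. -/
noncomputable def rotCW (x : EuclideanSpace ℝ (Fin 2)) : EuclideanSpace ℝ (Fin 2) :=
  (EuclideanSpace.equiv (Fin 2) ℝ).symm ![x 1, -x 0]

theorem cauchy_diff (γ f : ℝ → ℂ) (hγ : Continuous γ) (hf : Continuous f) :
    DifferentiableOn ℂ (fun z => ∫ t in (0:ℝ)..1, f t / (γ t - z)) (γ '' Set.Icc (0:ℝ) 1)ᶜ := by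
  intro z hz
  have hop : IsOpen (γ '' Set.Icc (0:ℝ) 1)ᶜ :=
    (isCompact_Icc.image hγ).isClosed.isOpen_compl
  obtain ⟨δ, hδ, hb⟩ := Metric.isOpen_iff.1 hop z hz
  have hne : ∀ x ∈ (γ '' Set.Icc (0:ℝ) 1)ᶜ, ∀ t ∈ Set.Icc (0:ℝ) 1, γ t - x ≠ 0 := by
    intro x hx t ht h
    exact hx ⟨t, ht, sub_eq_zero.1 h⟩
  have hcont : ∀ x ∈ (γ '' Set.Icc (0:ℝ) 1)ᶜ,
      IntervalIntegrable (fun t => f t / (γ t - x)) volume 0 1 := by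
    intro x hx
    apply ContinuousOn.intervalIntegrable
    rw [Set.uIcc_of_le zero_le_one]
    exact hf.continuousOn.div (by fun_prop) (hne x hx)
  have hcont' : IntervalIntegrable (fun t => f t / (γ t - z) ^ 2) volume 0 1 := by
    apply ContinuousOn.intervalIntegrable
    rw [Set.uIcc_of_le zero_le_one]
    exact hf.continuousOn.div (by fun_prop) (fun t ht => pow_ne_zero 2 (hne z hz t ht))
  have key := intervalIntegral.hasDerivAt_integral_of_dominated_loc_of_deriv_le
    (μ := volume) (a := 0) (b := 1) (F := fun x t => f t / (γ t - x))
    (F' := fun x t => f t / (γ t - x) ^ 2) (x₀ := z) (s := Metric.ball z (δ / 2))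
    (bound := fun t => ‖f t‖ / (δ / 2) ^ 2)
    (Metric.ball_mem_nhds z (half_pos hδ)) ?_ (hcont z hz) ?_ ?_ ?_ ?_
  · exact key.2.differentiableAt.differentiableWithinAt
  · filter_upwards [hop.mem_nhds hz] with x hx
    rw [Set.uIoc_of_le zero_le_one]
    exact (hcont x hx).aestronglyMeasurable
  · rw [Set.uIoc_of_le zero_le_one]
    exact hcont'.aestronglyMeasurable
  · refine Filter.Eventually.of_forall fun t ht x hx => ?_
    rw [Set.uIoc_of_le zero_le_one] at ht
    have ht' : t ∈ Set.Icc (0:ℝ) 1 := ⟨ht.1.le, ht.2⟩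
    rw [norm_div, norm_pow]
    have h1 : δ ≤ dist (γ t) z := by
      by_contra! h
      exact hb h ⟨t, ht', rfl⟩
    have h2 : δ / 2 ≤ ‖γ t - x‖ := by
      rw [← dist_eq_norm]
      have := dist_triangle (γ t) x z
      have := Metric.mem_ball.1 hx
      linarith
    gcongr
  · apply Continuous.intervalIntegrable
    fun_prop
  · refine Filter.Eventually.of_forall fun t ht x hx => ?_
    rw [Set.uIoc_of_le zero_le_one] at ht
    have ht' : t ∈ Set.Icc (0:ℝ) 1 := ⟨ht.1.le, ht.2⟩
    have hx' : γ t - x ≠ 0 :=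
      hne x (hb (Metric.ball_subset_ball (by linarith) hx)) t ht'
    have h := ((hasDerivAt_const x (f t)).div ((hasDerivAt_id x).const_sub (γ t)) hx')
    refine h.congr_deriv ?_
    simp

theorem re_comp_main (A : Matrix (Fin 2) (Fin 2) ℝ) (ℓ : EuclideanSpace ℝ (Fin 2) →L[ℝ] ℂ)
    (hℓ : ∑ i, ∑ j, (A i j : ℂ) * ℓ (EuclideanSpace.single i 1) * ℓ (EuclideanSpace.single j 1) = 0)
    (g : ℂ → ℂ) (U : Set ℂ) (hU : IsOpen U) (hg : DifferentiableOn ℂ g U)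
    (V : Set (EuclideanSpace ℝ (Fin 2))) (hV : IsOpen V) (hVU : ∀ x ∈ V, ℓ x ∈ U)
    (φ : EuclideanSpace ℝ (Fin 2) → ℝ) (hφ : ∀ x ∈ V, φ x = (g (ℓ x)).re) :
    ContDiffOn ℝ (⊤ : ℕ∞) φ V ∧ ∀ η ∈ V, adiv (fun ζ => matVec A (gradient φ ζ)) η = 0 := by
  constructor
  · have h1 : ContDiffOn ℝ (⊤ : ℕ∞) g U := (hg.contDiffOn hU).restrict_scalars ℝ
    have h2 : ContDiffOn ℝ (⊤ : ℕ∞) (fun x => g (ℓ x)) V :=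
      h1.comp ℓ.contDiff.contDiffOn hVU
    exact (Complex.reCLM.contDiff.comp_contDiffOn h2).congr hφ
  · intro η hη
    have hgrad : ∀ ζ ∈ V, ∀ j, gradient φ ζ j
        = (deriv g (ℓ ζ) * ℓ (EuclideanSpace.single j 1)).re := by
      intro ζ hζ j
      have h1 : HasFDerivAt φ (Complex.reCLM ∘L (deriv g (ℓ ζ) • ℓ)) ζ := by
        have hd : HasDerivAt g (deriv g (ℓ ζ)) (ℓ ζ) :=
          ((hg _ (hVU ζ hζ)).differentiableAt (hU.mem_nhds (hVU ζ hζ))).hasDerivAt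
        have := Complex.reCLM.hasFDerivAt.comp ζ (hd.comp_hasFDerivAt ζ ℓ.hasFDerivAt)
        refine this.congr_of_eventuallyEq ?_
        filter_upwards [hV.mem_nhds hζ] with x hx
        exact hφ x hx
      have h2 := inner_gradient_left (𝕜 := ℝ) (f := φ) (x := ζ) (y := EuclideanSpace.single j (1:ℝ))
      rw [h1.fderiv, EuclideanSpace.inner_single_right] at h2
      simpa using h2
    have hF : HasFDerivAt (fun ζ => matVec A (gradient φ ζ))
        (((EuclideanSpace.equiv (Fin 2) ℝ).symm : (Fin 2 → ℝ) →L[ℝ] EuclideanSpace ℝ (Fin 2)) ∘L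
          ContinuousLinearMap.pi (fun i => ∑ j, A i j •
          (Complex.reCLM ∘L (ℓ (EuclideanSpace.single j 1) • (deriv (deriv g) (ℓ η) • ℓ))))) η := by
      rw [← hasFDerivWithinAt_univ, hasFDerivWithinAt_euclidean]
      intro i
      rw [hasFDerivWithinAt_univ]
      have hd : HasDerivAt (deriv g) (deriv (deriv g) (ℓ η)) (ℓ η) :=
        (((hg.deriv hU) _ (hVU η hη)).differentiableAt (hU.mem_nhds (hVU η hη))).hasDerivAt
      have h1 := hd.comp_hasFDerivAt η ℓ.hasFDerivAt
      have h2 : HasFDerivAt (fun ζ => ∑ j, A i j *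
          (deriv g (ℓ ζ) * ℓ (EuclideanSpace.single j 1)).re)
          (∑ j, A i j •
          (Complex.reCLM ∘L (ℓ (EuclideanSpace.single j 1) • (deriv (deriv g) (ℓ η) • ℓ)))) η := by
        refine HasFDerivAt.fun_sum fun j _ => ?_
        exact (Complex.reCLM.hasFDerivAt.comp η
          (h1.mul_const (ℓ (EuclideanSpace.single j 1)))).const_mul (A i j)
      have h3 := h2.congr_of_eventuallyEq (f₁ := fun ζ => matVec A (gradient φ ζ) i) ?_
      · refine h3.congr_fderiv ?_
        ext x
        rfl
      · filter_upwards [hV.mem_nhds hη] with ζ hζ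
        simp only [← hgrad ζ hζ]
        fin_cases i <;> simp [matVec, Matrix.toLpLin_apply]
    rw [adiv, hF.fderiv, LinearMap.trace_eq_sum_inner _ (EuclideanSpace.basisFun (Fin 2) ℝ)]
    have hre := congrArg (fun z => (deriv (deriv g) (ℓ η) * z).re) hℓ
    simp [Fin.sum_univ_two, EuclideanSpace.inner_single_left] at hre ⊢
    linarith

/-- The anisotropic Dirichlet coordinate
`φ(η) = (‖w−v‖/(2π√(det A))) ∫₀¹ (1−t) ((v+t(w−v)−η)·n) / ((v+t(w−v)−η)ᵀ A⁻¹ (v+t(w−v)−η)) dt`,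
where `n` is the clockwise 90° rotation of the unit tangent of the segment from `v` to `w`,
is infinitely differentiable outside the segment and satisfies `div(A ∇φ)(η) = 0` there. -/
theorem anisotropic_dirichlet_coordinate_smooth_and_harmonic
    (A : Matrix (Fin 2) (Fin 2) ℝ) (hA : A.PosDef) (hAsymm : A.IsSymm)
    (v w : EuclideanSpace ℝ (Fin 2)) (hvw : v ≠ w)
    (n : EuclideanSpace ℝ (Fin 2)) (hn : n = rotCW (‖w - v‖⁻¹ • (w - v))) :
    ContDiffOn ℝ (⊤ : ℕ∞)
      (fun η : EuclideanSpace ℝ (Fin 2) =>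
        (‖w - v‖ / (2 * π * Real.sqrt A.det)) *
          ∫ t in (0:ℝ)..1,
            (1 - t) * ⟪v + t • (w - v) - η, n⟫ / quadForm A⁻¹ (v + t • (w - v) - η))
      ((fun t : ℝ => v + t • (w - v)) '' Set.Icc (0 : ℝ) 1)ᶜ
    ∧ ∀ η : EuclideanSpace ℝ (Fin 2),
        η ∉ (fun t : ℝ => v + t • (w - v)) '' Set.Icc (0 : ℝ) 1 →
        adiv (fun ζ => matVec A (gradient
          (fun ζ' => (‖w - v‖ / (2 * π * Real.sqrt A.det)) *
            ∫ t in (0:ℝ)..1,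
              (1 - t) * ⟪v + t • (w - v) - ζ', n⟫ / quadForm A⁻¹ (v + t • (w - v) - ζ')) ζ))
          η = 0 := by
  have hb : A 1 0 = A 0 1 := hAsymm.apply 0 1
  have hdet : 0 < A.det := hA.det_pos
  have ha : 0 < A 0 0 := hA.diag_pos
  have hdet2 : A.det = A 0 0 * A 1 1 - A 0 1 ^ 2 := by
    rw [Matrix.det_fin_two, hb]; ring
  set s := Real.sqrt A.det with hs
  have hs0 : 0 < s := Real.sqrt_pos.2 hdet
  have hs2 : s ^ 2 = A 0 0 * A 1 1 - A 0 1 ^ 2 := by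
    rw [hs, Real.sq_sqrt hdet.le, hdet2]
  obtain ⟨ℓ, hℓ⟩ : ∃ ℓ : EuclideanSpace ℝ (Fin 2) →L[ℝ] ℂ,
      ∀ x, ℓ x = ⟨A 0 0 * x 1 - A 0 1 * x 0, s * x 0⟩ := by
    refine ⟨(EuclideanSpace.proj (𝕜 := ℝ) (0 : Fin 2)).smulRight (⟨-A 0 1, s⟩ : ℂ) +
      (EuclideanSpace.proj (𝕜 := ℝ) (1 : Fin 2)).smulRight (⟨A 0 0, 0⟩ : ℂ), fun x => ?_⟩
    apply Complex.ext <;> simp <;> ring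
  have hnorm : ∀ x, Complex.normSq (ℓ x) = A 0 0 * A.det * quadForm A⁻¹ x := by
    intro x
    have hq : A.det * quadForm A⁻¹ x
        = A 1 1 * x 0 ^ 2 - 2 * A 0 1 * x 0 * x 1 + A 0 0 * x 1 ^ 2 := by
      simp only [quadForm, Fin.sum_univ_two, Matrix.inv_def, Matrix.adjugate_fin_two,
        Ring.inverse_eq_inv', Matrix.smul_apply, smul_eq_mul]
      simp [hb]
      field_simp
      ring
    rw [mul_assoc, hq, hℓ, Complex.normSq_mk]
    linear_combination (x 0) ^ 2 * hs2
  have hinj : ∀ x, ℓ x = 0 → x = 0 := by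
    intro x hx
    rw [hℓ] at hx
    have h1 := congrArg Complex.re hx
    have h2 := congrArg Complex.im hx
    simp only [Complex.zero_re, Complex.zero_im] at h1 h2
    have h0 : x 0 = 0 := by simpa [hs0.ne'] using h2
    have h3 : x 1 = 0 := by simpa [h0, ha.ne'] using h1
    ext i; fin_cases i <;> simp [h0, h3]
  clear_value s
  set C := ‖w - v‖ / (2 * π * s) with hC
  clear_value C
  clear hn
  set c : ℂ := ⟨n 1 / A 0 0, (n 0 + A 0 1 * (n 1 / A 0 0)) / s⟩ with hc
  have hkey : ∀ x, ⟪x, n⟫ / quadForm A⁻¹ x = (((A 0 0 * A.det : ℝ) : ℂ) * c / ℓ x).re := by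
    intro x
    have h1 : ⟪x, n⟫ = (c * (starRingEnd ℂ) (ℓ x)).re := by
      rw [hℓ, hc]
      simp [PiLp.inner_apply, Fin.sum_univ_two]
      field_simp
      ring
    have h2 : ((A 0 0 * A.det : ℝ) : ℂ) * c / ℓ x
        = ((A 0 0 * A.det / Complex.normSq (ℓ x) : ℝ) : ℂ) * (c * (starRingEnd ℂ) (ℓ x)) := by
      rw [div_eq_mul_inv, Complex.inv_def]
      push_cast
      ring
    rw [h2, Complex.re_ofReal_mul, ← h1, hnorm]
    by_cases hq : quadForm A⁻¹ x = 0
    · simp [hq]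
    · field_simp
  set γ : ℝ → EuclideanSpace ℝ (Fin 2) := fun t => v + t • (w - v) with hγ
  have hγc : Continuous γ := by fun_prop
  set f : ℝ → ℂ := fun t => (C * (1 - t) : ℝ) * (((A 0 0 * A.det : ℝ) : ℂ) * c) with hf
  have hfc : Continuous f := by fun_prop
  have hgd := cauchy_diff (fun t => ℓ (γ t)) f (by fun_prop) hfc
  have hmem : ∀ x ∈ (γ '' Set.Icc (0:ℝ) 1)ᶜ, ℓ x ∈ ((fun t => ℓ (γ t)) '' Set.Icc (0:ℝ) 1)ᶜ := by
    rintro x hx ⟨t, ht, h⟩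
    refine hx ⟨t, ht, ?_⟩
    have h' : ℓ (γ t - x) = 0 := by rw [map_sub]; exact sub_eq_zero.2 h
    exact sub_eq_zero.1 (hinj _ h')
  refine re_comp_main A ℓ ?_ _ _ (isCompact_Icc.image (by fun_prop)).isClosed.isOpen_compl hgd
    _ (isCompact_Icc.image hγc).isClosed.isOpen_compl hmem _ ?_
  · simp only [Fin.sum_univ_two, hℓ, hb]
    apply Complex.ext
    · simp
      linear_combination (-A 0 0) * hs2
    · simp
      ring
  · intro x hx
    have hint : IntervalIntegrable (fun t => f t / (ℓ (γ t) - ℓ x)) volume 0 1 := by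
      apply ContinuousOn.intervalIntegrable
      rw [Set.uIcc_of_le zero_le_one]
      refine hfc.continuousOn.div (by fun_prop) fun t ht h => ?_
      exact hmem x hx ⟨t, ht, sub_eq_zero.1 h⟩
    have h3 := Complex.reCLM.intervalIntegral_comp_comm hint
    simp only [Complex.reCLM_apply] at h3
    rw [← h3, ← intervalIntegral.integral_const_mul]
    congr 1
    funext t
    rw [← map_sub, hf, mul_div_assoc, mul_div_assoc, Complex.re_ofReal_mul, ← hkey, mul_assoc]
end

section
/- Let A be a symmetric positive definite 2×2 real matrix with symmetric positive definite square root A^{1/2} and inverse square root A^{-1/2}. Let v ≠ w be points of ℝ², let γ(t) = v + t(w−v), let n be the unit vector obtained by rotating (w−v)/‖w−v‖ clockwise by 90 degrees, and let η ∈ ℝ² with η ∉ {γ(t) : t ∈ [0,1]}. Then (‖w−v‖ / √(det A)) · ∫₀¹ log √((γ(t)−η)ᵀ A⁻¹ (γ(t)−η)) dt = (‖A^{-1/2}(w−v)‖ / √(nᵀ A n)) · ∫₀¹ log ‖A^{-1/2}(γ(t)−η)‖ dt; that is, the anisotropic Neumann boundary integral over the segment equals 1/√(nᵀAn) times the corresponding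 isotropic integral over the A^{-1/2}-transformed segment. -/
open Matrix Real MeasureTheory

theorem aux_norm (C : Matrix (Fin 2) (Fin 2) ℝ) (hC : C.IsSymm) (x : EuclideanSpace ℝ (Fin 2)) :
    ‖matVec C x‖ = Real.sqrt (quadForm (C * C) x) := by
  have h : C 1 0 = C 0 1 := hC.apply 0 1
  rw [EuclideanSpace.norm_eq]
  congr 1
  simp [matVec, quadForm, Matrix.toLpLin_apply, Matrix.mulVec, dotProduct, Fin.sum_univ_two,
    Matrix.mul_apply, h]
  ring

theorem aux_rot (A : Matrix (Fin 2) (Fin 2) ℝ) (hd : A.det ≠ 0)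
    (c : ℝ) (x : EuclideanSpace ℝ (Fin 2)) :
    quadForm A (rotCW (c • x)) = c ^ 2 * (A.det * quadForm A⁻¹ x) := by
  have e : A.det * quadForm A⁻¹ x = quadForm A.adjugate x := by
    have : A⁻¹ = (A.det)⁻¹ • A.adjugate := by rw [Matrix.inv_def, Ring.inverse_eq_inv']
    rw [this]
    simp only [quadForm, Fin.sum_univ_two, Matrix.smul_apply, smul_eq_mul]
    field_simp
  rw [e]
  simp [quadForm, rotCW, Fin.sum_univ_two, Matrix.adjugate_fin_two]
  ring

theorem aux_zero (B : Matrix (Fin 2) (Fin 2) ℝ) (hd : IsUnit B.det)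
    (x : EuclideanSpace ℝ (Fin 2)) (h : matVec B⁻¹ x = 0) : x = 0 := by
  have h2 : B⁻¹ *ᵥ x.ofLp = 0 := by
    have := congrArg WithLp.ofLp h
    simpa [matVec, Matrix.toLpLin_apply] using this
  have h3 : B *ᵥ (B⁻¹ *ᵥ x.ofLp) = x.ofLp := by
    rw [Matrix.mulVec_mulVec, Matrix.mul_nonsing_inv _ hd, Matrix.one_mulVec]
  rw [h2, Matrix.mulVec_zero] at h3
  ext i
  simp [← h3]

/-- Let `A` be symmetric positive definite with symmetric positive definite
square root `B = A^{1/2}` (so `A^{-1/2} = B⁻¹`). For a segment `γ(t) = v + t(w−v)` with unit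
normal `n` (clockwise rotation of the unit tangent) and `η` off the closed segment, the
anisotropic Neumann boundary integral equals `1/√(nᵀAn)` times the isotropic integral over the
`A^{-1/2}`-transformed segment:
`(‖w−v‖/√(det A)) ∫₀¹ log √((γ(t)−η)ᵀ A⁻¹ (γ(t)−η)) dt
  = (‖A^{-1/2}(w−v)‖/√(nᵀ A n)) ∫₀¹ log ‖A^{-1/2}(γ(t)−η)‖ dt`. -/
theorem anisotropic_neumann_integral_transform_2d
    (A B : Matrix (Fin 2) (Fin 2) ℝ)
    (hA : A.PosDef) (hAsymm : A.IsSymm)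
    (hB : B.PosDef) (hBsymm : B.IsSymm) (hBA : B * B = A)
    (v w : EuclideanSpace ℝ (Fin 2)) (hvw : v ≠ w)
    (n : EuclideanSpace ℝ (Fin 2)) (hn : n = rotCW (‖w - v‖⁻¹ • (w - v)))
    (η : EuclideanSpace ℝ (Fin 2))
    (hη : η ∉ (fun t : ℝ => v + t • (w - v)) '' Set.Icc (0 : ℝ) 1) :
    (‖w - v‖ / Real.sqrt A.det) *
      ∫ t in (0:ℝ)..1, Real.log (Real.sqrt (quadForm A⁻¹ (v + t • (w - v) - η))) =
    (‖matVec B⁻¹ (w - v)‖ / Real.sqrt (quadForm A n)) *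
      ∫ t in (0:ℝ)..1, Real.log ‖matVec B⁻¹ (v + t • (w - v) - η)‖ := by
  have hCs : (B⁻¹).IsSymm := by
    rw [Matrix.IsSymm, Matrix.transpose_nonsing_inv, hBsymm.eq]
  have hAi : A⁻¹ = B⁻¹ * B⁻¹ := by rw [← hBA, Matrix.mul_inv_rev]
  have hN : ∀ x, ‖matVec B⁻¹ x‖ = Real.sqrt (quadForm A⁻¹ x) := by
    intro x
    rw [hAi, aux_norm _ hCs]
  have hdet : 0 < A.det := hA.det_pos
  have hd : w - v ≠ 0 := sub_ne_zero.mpr hvw.symm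
  have hL : 0 < ‖w - v‖ := norm_pos_iff.mpr hd
  have hq : 0 < Real.sqrt (quadForm A⁻¹ (w - v)) := by
    rw [← hN]
    exact norm_pos_iff.mpr fun h => hd (aux_zero B hB.det_pos.ne'.isUnit _ h)
  have hs : 0 < Real.sqrt A.det := Real.sqrt_pos.mpr hdet
  simp only [hN]
  congr 1
  rw [hn, aux_rot A hdet.ne', Real.sqrt_mul (sq_nonneg _), Real.sqrt_sq (by positivity),
    Real.sqrt_mul hdet.le]
  field_simp
end

section
/- Let A be a symmetric positive definite 2×2 real matrix, let v ≠ w be points of ℝ², γ(t) = v + t(w−v), n the unit vector obtained by rotating (w−v)/‖w−v‖ clockwise by 90 degrees, and η ∈ ℝ² with η ∉ {γ(t) : t ∈ [0,1]}. Set v' = A^{-1/2}v, w' = A^{-1/2}w, y = A^{-1/2}η, γ'(t) = v' + t(w'−v'), and let n' be the unit vector obtained by rotating (w'−v')/‖w'−v'‖ clockwise by 90 degrees. Then (‖w−v‖/(2π√(det A))) ∫₀¹ (1−t) · ((γ(t)−η)·n) / ((γ(t)−η)ᵀ A⁻¹ (γ(t)−η)) dt = (‖w'−v'‖/(2π)) ∫₀¹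 (1−t) · ((γ'(t)−y)·n') / ‖γ'(t)−y‖² dt; that is, the anisotropic Dirichlet boundary integral of the hat function over the segment equals the corresponding isotropic integral over the A^{-1/2}-transformed segment. -/
open Matrix Real MeasureTheory
open scoped RealInnerProductSpace

theorem aux_norm_rot (x d : EuclideanSpace ℝ (Fin 2)) :
    ‖d‖ * ⟪x, rotCW (‖d‖⁻¹ • d)⟫ = x 0 * d 1 - x 1 * d 0 := by
  by_cases hd : d = 0
  · subst hd; simp
  · have h : ‖d‖ ≠ 0 := norm_ne_zero_iff.mpr hd
    simp [rotCW, PiLp.inner_apply, Fin.sum_univ_two]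
    field_simp
    ring

theorem aux_matVec (C : Matrix (Fin 2) (Fin 2) ℝ) (x : EuclideanSpace ℝ (Fin 2)) (i : Fin 2) :
    matVec C x i = C i 0 * x 0 + C i 1 * x 1 := by
  fin_cases i <;> simp [matVec, Matrix.toLpLin_apply]

theorem aux_quad (C : Matrix (Fin 2) (Fin 2) ℝ) (hC : C.IsSymm)
    (x : EuclideanSpace ℝ (Fin 2)) :
    quadForm (C * C) x = ‖matVec C x‖ ^ 2 := by
  have h : C 1 0 = C 0 1 := hC.apply 0 1
  rw [EuclideanSpace.norm_sq_eq]
  simp only [Fin.sum_univ_two, quadForm, Matrix.mul_apply, Real.norm_eq_abs, sq_abs, aux_matVec, h]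
  ring

/-- Let `A` be symmetric positive definite with symmetric positive definite
square root `B = A^{1/2}`. For a segment `γ(t) = v + t(w−v)` with unit normal `n` and `η` off
the closed segment, setting `v' = A^{-1/2}v`, `w' = A^{-1/2}w`, `y = A^{-1/2}η`,
`γ'(t) = v' + t(w'−v')` with unit normal `n'`, the anisotropic Dirichlet boundary integral of
the hat function over the segment equals the corresponding isotropic integral over the
`A^{-1/2}`-transformed segment:
`(‖w−v‖/(2π√det A)) ∫₀¹ (1−t)((γ(t)−η)·n)/((γ(t)−η)ᵀA⁻¹(γ(t)−η)) dt
  = (‖w'−v'‖/(2π)) ∫₀¹ (1−t)((γ'(t)−y)·n')/‖γ'(t)−y‖² dt`. -/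
theorem anisotropic_dirichlet_integral_transform_2d
    (A B : Matrix (Fin 2) (Fin 2) ℝ)
    (hA : A.PosDef) (hAsymm : A.IsSymm)
    (hB : B.PosDef) (hBsymm : B.IsSymm) (hBA : B * B = A)
    (v w : EuclideanSpace ℝ (Fin 2)) (hvw : v ≠ w)
    (n : EuclideanSpace ℝ (Fin 2)) (hn : n = rotCW (‖w - v‖⁻¹ • (w - v)))
    (η : EuclideanSpace ℝ (Fin 2))
    (hη : η ∉ (fun t : ℝ => v + t • (w - v)) '' Set.Icc (0 : ℝ) 1)
    (v' w' y : EuclideanSpace ℝ (Fin 2))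
    (hv' : v' = matVec B⁻¹ v) (hw' : w' = matVec B⁻¹ w) (hy : y = matVec B⁻¹ η)
    (n' : EuclideanSpace ℝ (Fin 2)) (hn' : n' = rotCW (‖w' - v'‖⁻¹ • (w' - v'))) :
    (‖w - v‖ / (2 * π * Real.sqrt A.det)) *
      ∫ t in (0:ℝ)..1,
        (1 - t) * ⟪v + t • (w - v) - η, n⟫ / quadForm A⁻¹ (v + t • (w - v) - η) =
    (‖w' - v'‖ / (2 * π)) *
      ∫ t in (0:ℝ)..1,
        (1 - t) * ⟪v' + t • (w' - v') - y, n'⟫ / ‖v' + t • (w' - v') - y‖ ^ 2 := by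
  have hdB : 0 < B.det := hB.det_pos
  have hs : Real.sqrt A.det = B.det := by
    rw [← hBA, Matrix.det_mul, Real.sqrt_mul_self hdB.le]
  have hAi : A⁻¹ = B⁻¹ * B⁻¹ := by rw [← hBA, Matrix.mul_inv_rev]
  have hCs : (B⁻¹).IsSymm := by
    rw [Matrix.IsSymm, Matrix.transpose_nonsing_inv, hBsymm.eq]
  have hdC : (B⁻¹).det = B.det⁻¹ := by
    rw [Matrix.det_nonsing_inv, Ring.inverse_eq_inv']
  rw [hs, hAi, ← intervalIntegral.integral_const_mul, ← intervalIntegral.integral_const_mul]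
  congr 1
  funext t
  have hd : w' - v' = matVec B⁻¹ (w - v) := by
    rw [hw', hv']; simp only [matVec, map_sub]
  have hx : v' + t • (w' - v') - y = matVec B⁻¹ (v + t • (w - v) - η) := by
    rw [hw', hv', hy]; simp only [matVec, map_sub, map_add, map_smul]
  rw [aux_quad _ hCs, hx]
  generalize v + t • (w - v) - η = x
  have e1 := aux_norm_rot x (w - v)
  have e2 := aux_norm_rot (matVec B⁻¹ x) (w' - v')
  rw [← hn] at e1
  rw [← hn', hd] at e2
  rw [hd]
  have e3 : ‖matVec B⁻¹ (w - v)‖ * ⟪matVec B⁻¹ x, n'⟫ = B.det⁻¹ * (‖w - v‖ * ⟪x, n⟫) := by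
    rw [e1, e2, ← hdC, Matrix.det_fin_two]
    simp only [aux_matVec]
    ring
  calc _ = (1 - t) / (2 * π) * (B.det⁻¹ * (‖w - v‖ * ⟪x, n⟫)) / ‖matVec B⁻¹ x‖ ^ 2 := by
        rw [div_eq_mul_inv ‖w - v‖, mul_inv]; ring
    _ = _ := by rw [← e3]; ring
end

section
/- Let A be a symmetric positive definite 3×3 real matrix, let v₁, v₂, v₃ ∈ ℝ³ be affinely independent, let n = ((v₂−v₁) × (v₃−v₁)) / ‖(v₂−v₁) × (v₃−v₁)‖ be the unit normal of the triangle, let T = {(s,t) : s ≥ 0, t ≥ 0, s+t ≤ 1}, ξ(s,t) = v₁ + s(v₂−v₁) + t(v₃−v₁), and let η ∈ ℝ³ lie outside the closed triangle {ξ(s,t) : (s,t) ∈ T}. Set vᵢ' = A^{-1/2}vᵢ. Then (‖(v₂−v₁) × (v₃−v₁)‖ / (4π√(det A))) ∬_T ((ξ(s,t)−η)ᵀ A⁻¹ (ξ(s,t)−η))^{-1/2} ds dt = (1/√(nᵀ A n)) · (‖(v₂'−v₁') × (v₃'−v₁')‖ / (4π)) ∬_T ‖A^{-1/2}(ξ(s,t)−η)‖⁻¹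 ds dt; that is, the anisotropic Neumann boundary integral over the triangle equals 1/√(nᵀAn) times the isotropic integral over the A^{-1/2}-transformed triangle. -/
open Matrix Real MeasureTheory

/-- The cross product on Euclidean `ℝ³`. -/
noncomputable def cross3 (u v : EuclideanSpace ℝ (Fin 3)) : EuclideanSpace ℝ (Fin 3) :=
  (EuclideanSpace.equiv (Fin 3) ℝ).symm
    (crossProduct ((EuclideanSpace.equiv (Fin 3) ℝ) u) ((EuclideanSpace.equiv (Fin 3) ℝ) v))

/-- The standard 2-simplex `T = {(s,t) : s ≥ 0, t ≥ 0, s + t ≤ 1} ⊆ ℝ²`. -/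
def simplexT : Set (ℝ × ℝ) := {p | 0 ≤ p.1 ∧ 0 ≤ p.2 ∧ p.1 + p.2 ≤ 1}

theorem aux_quadForm (M : Matrix (Fin 3) (Fin 3) ℝ) (hM : M.IsSymm)
    (x : EuclideanSpace ℝ (Fin 3)) : quadForm (M * M) x = ‖matVec M x‖ ^ 2 := by
  have h10 : M 1 0 = M 0 1 := hM.apply 0 1
  have h20 : M 2 0 = M 0 2 := hM.apply 0 2
  have h21 : M 2 1 = M 1 2 := hM.apply 1 2
  rw [EuclideanSpace.norm_sq_eq]
  simp only [quadForm, matVec, Matrix.toLpLin_apply, Matrix.mulVec, dotProduct,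
    Fin.sum_univ_three, Matrix.mul_apply, Real.norm_eq_abs, sq_abs, h10, h20, h21]
  ring

theorem aux_cross (M : Matrix (Fin 3) (Fin 3) ℝ) (hM : M.IsSymm)
    (u w : EuclideanSpace ℝ (Fin 3)) :
    matVec M (cross3 (matVec M u) (matVec M w)) = M.det • cross3 u w := by
  have h10 : M 1 0 = M 0 1 := hM.apply 0 1
  have h20 : M 2 0 = M 0 2 := hM.apply 0 2
  have h21 : M 2 1 = M 1 2 := hM.apply 1 2
  ext i
  fin_cases i <;>
  · simp [cross3, matVec, Matrix.toLpLin_apply, Matrix.mulVec, dotProduct, crossProduct,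
      Fin.sum_univ_three, Matrix.det_fin_three, h10, h20, h21]
    ring

theorem aux_matVec_s16 (M N : Matrix (Fin 3) (Fin 3) ℝ) (h : M * N = 1)
    (x : EuclideanSpace ℝ (Fin 3)) : matVec M (matVec N x) = x := by
  simp [matVec, Matrix.toLpLin_apply, Matrix.mulVec_mulVec, h]

/-- Let `A` be a symmetric positive definite `3 × 3` matrix with symmetric
positive definite square root `B = A^{1/2}`, let `v₁, v₂, v₃` be affinely independent with
unit normal `n`, `ξ(s,t) = v₁ + s(v₂−v₁) + t(v₃−v₁)`, and `η` outside the closed triangle.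
With `vᵢ' = A^{-1/2}vᵢ`, the anisotropic Neumann boundary integral over the triangle equals
`1/√(nᵀAn)` times the isotropic integral over the `A^{-1/2}`-transformed triangle. -/
theorem anisotropic_neumann_integral_transform_3d
    (A B : Matrix (Fin 3) (Fin 3) ℝ)
    (hA : A.PosDef) (hAsymm : A.IsSymm)
    (hB : B.PosDef) (hBsymm : B.IsSymm) (hBA : B * B = A)
    (v₁ v₂ v₃ : EuclideanSpace ℝ (Fin 3)) (hind : cross3 (v₂ - v₁) (v₃ - v₁) ≠ 0)
    (n : EuclideanSpace ℝ (Fin 3))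
    (hn : n = ‖cross3 (v₂ - v₁) (v₃ - v₁)‖⁻¹ • cross3 (v₂ - v₁) (v₃ - v₁))
    (η : EuclideanSpace ℝ (Fin 3))
    (hη : η ∉ (fun p : ℝ × ℝ => v₁ + p.1 • (v₂ - v₁) + p.2 • (v₃ - v₁)) '' simplexT)
    (v₁' v₂' v₃' : EuclideanSpace ℝ (Fin 3))
    (hv₁' : v₁' = matVec B⁻¹ v₁) (hv₂' : v₂' = matVec B⁻¹ v₂) (hv₃' : v₃' = matVec B⁻¹ v₃) :
    (‖cross3 (v₂ - v₁) (v₃ - v₁)‖ / (4 * π * Real.sqrt A.det)) *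
      ∫ p in simplexT,
        (quadForm A⁻¹ (v₁ + p.1 • (v₂ - v₁) + p.2 • (v₃ - v₁) - η)) ^ (-(1:ℝ)/2) =
    (1 / Real.sqrt (quadForm A n)) *
      ((‖cross3 (v₂' - v₁') (v₃' - v₁')‖ / (4 * π)) *
        ∫ p in simplexT,
          ‖matVec B⁻¹ (v₁ + p.1 • (v₂ - v₁) + p.2 • (v₃ - v₁) - η)‖⁻¹) := by
  have hd : 0 < B.det := hB.det_pos
  have hu : IsUnit B.det := hd.ne'.isUnit
  have hBB : B * B⁻¹ = 1 := Matrix.mul_nonsing_inv B hu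
  have hBB' : B⁻¹ * B = 1 := Matrix.nonsing_inv_mul B hu
  have hAinv : A⁻¹ = B⁻¹ * B⁻¹ := by rw [← hBA, Matrix.mul_inv_rev]
  have hBi : B⁻¹.IsSymm := by
    rw [Matrix.IsSymm, Matrix.transpose_nonsing_inv, hBsymm]
  have hint : ∀ x, (quadForm A⁻¹ x) ^ (-(1:ℝ)/2) = ‖matVec B⁻¹ x‖⁻¹ := by
    intro x
    rw [hAinv, aux_quadForm _ hBi, ← Real.rpow_natCast, ← Real.rpow_mul (norm_nonneg _),
      ← Real.rpow_neg_one]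
    norm_num
  have hdet : Real.sqrt A.det = B.det := by
    rw [← hBA, Matrix.det_mul, Real.sqrt_mul_self hd.le]
  have hs2 : v₂' - v₁' = matVec B⁻¹ (v₂ - v₁) := by
    rw [hv₂', hv₁']; simp [matVec]
  have hs3 : v₃' - v₁' = matVec B⁻¹ (v₃ - v₁) := by
    rw [hv₃', hv₁']; simp [matVec]
  have hc := aux_cross B hBsymm (v₂' - v₁') (v₃' - v₁')
  rw [hs2, hs3, aux_matVec_s16 _ _ hBB, aux_matVec_s16 _ _ hBB, ← hs2, ← hs3] at hc
  have hq : Real.sqrt (quadForm A n) = ‖cross3 (v₂ - v₁) (v₃ - v₁)‖⁻¹ *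
      (B.det * ‖cross3 (v₂' - v₁') (v₃' - v₁')‖) := by
    have h1 : matVec B n = ‖cross3 (v₂ - v₁) (v₃ - v₁)‖⁻¹ •
        matVec B (cross3 (v₂ - v₁) (v₃ - v₁)) := by
      rw [hn]; simp [matVec]
    rw [← hBA, aux_quadForm _ hBsymm, Real.sqrt_sq (norm_nonneg _), h1, hc, norm_smul,
      norm_smul, norm_inv, norm_norm, Real.norm_of_nonneg hd.le]
  have hc' : ‖cross3 (v₂' - v₁') (v₃' - v₁')‖ ≠ 0 := by
    intro h
    rw [norm_eq_zero] at h
    rw [h, smul_zero] at hc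
    apply hind
    rw [← aux_matVec_s16 _ _ hBB' (cross3 (v₂ - v₁) (v₃ - v₁)), hc]
    simp [matVec]
  have hc0 : ‖cross3 (v₂ - v₁) (v₃ - v₁)‖ ≠ 0 := norm_ne_zero_iff.mpr hind
  simp only [hint]
  rw [hdet, hq, ← mul_assoc]
  congr 1
  have := Real.pi_pos.ne'
  have := hd.ne'
  field_simp
end

section
/- Let A be a symmetric positive definite 2×2 real matrix, let v ≠ w be points of ℝ², γ(t) = v + t(w−v), n the unit vector obtained by rotating (w−v)/‖w−v‖ clockwise by 90 degrees, v' = A^{-1/2}v, w' = A^{-1/2}w, γ'(t) = v' + t(w'−v'). Define ψ^A(η) = −(‖w−v‖/(2π√(det A))) ∫₀¹ log √((γ(t)−η)ᵀ A⁻¹ (γ(t)−η)) dt for η ∉ {γ(t) : t ∈ [0,1]}, and ψ(y) = −(‖w'−v'‖/(2π)) ∫₀¹ log ‖γ'(t)−y‖ dt for y ∉ {γ'(t) : t ∈ [0,1]}. Then for every η ∉ {γ(t) : t ∈ [0,1]}, both functions are differentiable at the relevant points and ∇ψ^A(η) = (1/√(nᵀ A n)) · A^{-1/2} (∇ψ)(A^{-1/2}η).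 -/
open Matrix Real MeasureTheory

theorem matVec_inner_symm (M : Matrix (Fin 2) (Fin 2) ℝ) (hM : M.IsSymm)
    (x y : EuclideanSpace ℝ (Fin 2)) : inner ℝ (matVec M x) y = inner ℝ x (matVec M y) := by
  have h := hM.apply 0 1
  simp [matVec, PiLp.inner_apply, Matrix.toEuclideanLin_apply, Matrix.mulVec, dotProduct,
    Fin.sum_univ_two]
  rw [h]
  ring

theorem norm_matVec_sq (M : Matrix (Fin 2) (Fin 2) ℝ) (hM : M.IsSymm)
    (x : EuclideanSpace ℝ (Fin 2)) : ‖matVec M x‖ ^ 2 = quadForm (M * M) x := by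
  have h := hM.apply 0 1
  rw [EuclideanSpace.norm_sq_eq]
  simp [matVec, quadForm, Matrix.toEuclideanLin_apply, Matrix.mulVec, dotProduct,
    Fin.sum_univ_two, Matrix.mul_apply]
  rw [h]
  ring

theorem quadForm_rot (A : Matrix (Fin 2) (Fin 2) ℝ) (hA : A.IsSymm) (hd : A.det ≠ 0)
    (x : EuclideanSpace ℝ (Fin 2)) : quadForm A (rotCW x) = A.det * quadForm A⁻¹ x := by
  have h := hA.apply 0 1
  have h2 : A⁻¹ = A.det⁻¹ • A.adjugate := by
    rw [Matrix.inv_def, Ring.inverse_eq_inv']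
  rw [h2, Matrix.adjugate_fin_two]
  simp [quadForm, rotCW, Fin.sum_univ_two]
  field_simp
  rw [h]
  ring

theorem quadForm_smul (A : Matrix (Fin 2) (Fin 2) ℝ) (c : ℝ)
    (x : EuclideanSpace ℝ (Fin 2)) : quadForm A (c • x) = c ^ 2 * quadForm A x := by
  simp [quadForm, Fin.sum_univ_two]
  ring

theorem diff_logpot {E : Type*} [NormedAddCommGroup E] [InnerProductSpace ℝ E]
    (g : ℝ → E) (hg : Continuous g) (y : E) (hy : y ∉ g '' Set.Icc (0:ℝ) 1) :
    DifferentiableAt ℝ (fun y => ∫ t in (0:ℝ)..1, Real.log ‖g t - y‖) y := by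
  have hc : IsClosed (g '' Set.Icc (0:ℝ) 1) := (isCompact_Icc.image hg).isClosed
  obtain ⟨ε, hε, hball⟩ := Metric.isOpen_iff.1 hc.isOpen_compl y hy
  have hfar : ∀ t ∈ Set.Icc (0:ℝ) 1, ∀ x ∈ Metric.ball y (ε/2), ε / 2 ≤ ‖g t - x‖ := by
    intro t ht x hx
    have h1 : ε ≤ dist (g t) y := by
      by_contra hlt
      exact hball (Metric.mem_ball.2 (not_le.1 hlt)) ⟨t, ht, rfl⟩
    have h2 := dist_triangle (g t) x y
    rw [Metric.mem_ball] at hx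
    rw [← dist_eq_norm]
    linarith
  have hI : ∀ t, t ∈ Set.uIoc (0:ℝ) 1 → t ∈ Set.Icc (0:ℝ) 1 := by
    intro t ht
    rw [Set.uIoc_of_le zero_le_one] at ht
    exact ⟨ht.1.le, ht.2⟩
  have hyb : y ∈ Metric.ball y (ε/2) := Metric.mem_ball_self (by positivity)
  have key := intervalIntegral.hasFDerivAt_integral_of_dominated_of_fderiv_le
    (𝕜 := ℝ) (μ := volume) (a := 0) (b := 1) (x₀ := y) (s := Metric.ball y (ε/2))
    (F := fun x t => Real.log ‖g t - x‖)
    (F' := fun x t => -((‖g t - x‖ ^ 2)⁻¹ • innerSL ℝ (g t - x)))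
    (bound := fun _ => (ε / 2)⁻¹)
    (Metric.ball_mem_nhds y (by positivity)) ?_ ?_ ?_ ?_ ?_ ?_
  · exact key.differentiableAt
  · refine Filter.Eventually.of_forall fun x => ?_
    have : Measurable fun t => Real.log ‖g t - x‖ :=
      Real.measurable_log.comp (by fun_prop : Continuous fun t => ‖g t - x‖).measurable
    exact this.aestronglyMeasurable
  · apply ContinuousOn.intervalIntegrable
    rw [Set.uIcc_of_le zero_le_one]
    refine ContinuousOn.log (by fun_prop) fun t ht => ?_
    have := hfar t ht y hyb
    linarith
  · haveI : SecondCountableTopologyEither ℝ (E →L[ℝ] ℝ) :=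
      secondCountableTopologyEither_of_left ℝ _
    refine ContinuousOn.aestronglyMeasurable ?_ measurableSet_uIoc
    have hcn : ContinuousOn (fun t => ‖g t - y‖ ^ 2) (Set.uIoc (0:ℝ) 1) := by fun_prop
    refine ContinuousOn.neg (ContinuousOn.smul (hcn.inv₀ ?_) ?_)
    · intro t ht
      have := hfar t (hI t ht) y hyb
      exact pow_ne_zero _ (by linarith)
    · exact ((innerSL ℝ).continuous.comp (by fun_prop)).continuousOn
  · refine Filter.Eventually.of_forall fun t ht x hx => ?_
    have h := hfar t (hI t ht) x hx
    have hpos : 0 < ‖g t - x‖ := by linarith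
    rw [norm_neg, norm_smul, innerSL_apply_norm, norm_inv, norm_pow, norm_norm]
    have : (‖g t - x‖ ^ 2)⁻¹ * ‖g t - x‖ = ‖g t - x‖⁻¹ := by field_simp
    rw [this]
    exact inv_anti₀ (by positivity) h
  · exact intervalIntegrable_const
  · refine Filter.Eventually.of_forall fun t ht x hx => ?_
    have h := hfar t (hI t ht) x hx
    have hpos : 0 < ‖g t - x‖ := by linarith
    have h1 : HasFDerivAt (fun x => g t - x) (-ContinuousLinearMap.id ℝ E) x :=
      (hasFDerivAt_id x).const_sub (g t)
    have h2 := (h1.norm_sq.log (by positivity)).const_mul (1/2 : ℝ)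
    have h3 : (fun x => Real.log ‖g t - x‖) = fun x => (1/2 : ℝ) * Real.log (‖g t - x‖ ^ 2) := by
      funext z
      rw [Real.log_pow]; push_cast; ring
    rw [h3]
    refine h2.congr_fderiv ?_
    ext z
    simp
    ring

/-- Let `A` be symmetric positive definite with symmetric positive definite
square root `B = A^{1/2}` (so `A^{-1/2} = B⁻¹`). Let `γ(t) = v + t(w−v)` with unit normal `n`,
`v' = A^{-1/2}v`, `w' = A^{-1/2}w`, `γ'(t) = v' + t(w'−v')`. Define
`ψ^A(η) = −(‖w−v‖/(2π√det A)) ∫₀¹ log √((γ(t)−η)ᵀA⁻¹(γ(t)−η)) dt` and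
`ψ(y) = −(‖w'−v'‖/(2π)) ∫₀¹ log ‖γ'(t)−y‖ dt`. Then for every `η` off the closed segment,
both functions are differentiable at the relevant points and
`∇ψ^A(η) = (1/√(nᵀAn)) A^{-1/2} (∇ψ)(A^{-1/2}η)`. -/
theorem anisotropic_neumann_gradient_transform_2d
    (A B : Matrix (Fin 2) (Fin 2) ℝ)
    (hA : A.PosDef) (hAsymm : A.IsSymm)
    (hB : B.PosDef) (hBsymm : B.IsSymm) (hBA : B * B = A)
    (v w : EuclideanSpace ℝ (Fin 2)) (hvw : v ≠ w)
    (n : EuclideanSpace ℝ (Fin 2)) (hn : n = rotCW (‖w - v‖⁻¹ • (w - v)))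
    (v' w' : EuclideanSpace ℝ (Fin 2)) (hv' : v' = matVec B⁻¹ v) (hw' : w' = matVec B⁻¹ w)
    (ψA ψI : EuclideanSpace ℝ (Fin 2) → ℝ)
    (hψA : ∀ η, ψA η = -(‖w - v‖ / (2 * π * Real.sqrt A.det)) *
      ∫ t in (0:ℝ)..1, Real.log (Real.sqrt (quadForm A⁻¹ (v + t • (w - v) - η))))
    (hψI : ∀ y, ψI y = -(‖w' - v'‖ / (2 * π)) *
      ∫ t in (0:ℝ)..1, Real.log ‖v' + t • (w' - v') - y‖) :
    ∀ η : EuclideanSpace ℝ (Fin 2),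
      η ∉ (fun t : ℝ => v + t • (w - v)) '' Set.Icc (0 : ℝ) 1 →
      DifferentiableAt ℝ ψA η ∧ DifferentiableAt ℝ ψI (matVec B⁻¹ η) ∧
        gradient ψA η =
          (1 / Real.sqrt (quadForm A n)) • matVec B⁻¹ (gradient ψI (matVec B⁻¹ η)) := by
  intro η hη
  have hdB : IsUnit B.det := isUnit_iff_ne_zero.2 hB.det_pos.ne'
  have hdA : 0 < A.det := hA.det_pos
  set C := B⁻¹ with hC
  have hCs : C.IsSymm := by
    rw [Matrix.IsSymm, hC, Matrix.transpose_nonsing_inv, hBsymm.eq]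
  have hCC : C * C = A⁻¹ := by rw [← hBA, Matrix.mul_inv_rev]
  have hBC : ∀ x, matVec B (matVec C x) = x := by
    intro x
    simp only [matVec, Matrix.toEuclideanLin_apply, Matrix.mulVec_mulVec, hC,
      Matrix.mul_nonsing_inv B hdB, Matrix.one_mulVec]
  let L : EuclideanSpace ℝ (Fin 2) →L[ℝ] EuclideanSpace ℝ (Fin 2) :=
    LinearMap.toContinuousLinearMap (Matrix.toEuclideanLin C)
  have hL : ∀ x, matVec C x = L x := fun x => rfl
  have hsub : w' - v' = matVec C (w - v) := by
    rw [hv', hw', hL, hL, hL, map_sub]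
  have hγ : ∀ (t : ℝ) z, v' + t • (w' - v') - matVec C z = matVec C (v + t • (w - v) - z) := by
    intro t z
    rw [hsub, hv']
    simp only [hL, map_sub, map_add, map_smul]
  have hne : w - v ≠ 0 := sub_ne_zero.2 hvw.symm
  have hne' : w' - v' ≠ 0 := by
    intro h0
    apply hne
    rw [← hBC (w - v), ← hsub, h0]
    simp [matVec]
  have hp : 0 < ‖w - v‖ := norm_pos_iff.2 hne
  have hp' : 0 < ‖w' - v'‖ := norm_pos_iff.2 hne'
  have hq : Real.sqrt (quadForm A n) = ‖w - v‖⁻¹ * (Real.sqrt A.det * ‖w' - v'‖) := by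
    have : quadForm A n = (‖w - v‖⁻¹) ^ 2 * (A.det * ‖w' - v'‖ ^ 2) := by
      rw [hn, quadForm_rot A hAsymm hdA.ne', quadForm_smul, hsub, norm_matVec_sq C hCs, hCC]
      ring
    rw [this, Real.sqrt_mul (by positivity), Real.sqrt_mul hdA.le, Real.sqrt_sq (by positivity),
      Real.sqrt_sq (by positivity)]
  have hsq : 0 < Real.sqrt A.det := Real.sqrt_pos.2 hdA
  set c : ℝ := 1 / Real.sqrt (quadForm A n) with hc
  have hψ : ψA = fun z => c * ψI (L z) := by
    funext z
    rw [hψA, hψI, ← hL]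
    simp only [hγ]
    have : ∀ x, Real.sqrt (quadForm A⁻¹ x) = ‖matVec C x‖ := by
      intro x
      rw [← hCC, ← norm_matVec_sq C hCs, Real.sqrt_sq (norm_nonneg _)]
    simp only [this]
    rw [hc, hq]
    field_simp
  have hdI : DifferentiableAt ℝ ψI (matVec C η) := by
    have h := diff_logpot (fun t : ℝ => v' + t • (w' - v')) (by fun_prop) (matVec C η) ?_
    · have : ψI = fun y => -(‖w' - v'‖ / (2 * π)) *
          ∫ t in (0:ℝ)..1, Real.log ‖v' + t • (w' - v') - y‖ := funext hψI
      rw [this]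
      exact h.const_mul _
    · rintro ⟨t, ht, hte⟩
      apply hη
      refine ⟨t, ht, ?_⟩
      have h1 : matVec C (v + t • (w - v) - η) = 0 := by
        rw [← hγ]; exact sub_eq_zero.2 hte
      have h2 := hBC (v + t • (w - v) - η)
      rw [h1] at h2
      have h3 : matVec B 0 = 0 := by simp [matVec]
      rw [h3] at h2
      exact sub_eq_zero.1 h2.symm
  have hG : HasGradientAt ψA (c • matVec C (gradient ψI (matVec C η))) η := by
    rw [hasGradientAt_iff_hasFDerivAt, hψ]
    have h1 := hasGradientAt_iff_hasFDerivAt.1 hdI.hasGradientAt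
    have h2 := (HasFDerivAt.comp η h1 L.hasFDerivAt).const_mul c
    refine h2.congr_fderiv ?_
    ext z
    rw [InnerProductSpace.toDual_apply_apply, real_inner_smul_left, matVec_inner_symm C hCs]
    rfl
  exact ⟨hG.differentiableAt, hdI, hG.gradient⟩
end
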